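/- Under the standing hypotheses, the striction curve satisfies σ'(s) = τ₁(s)·v₀(s) + κ₁(s)·t₀(s) for all s ∈ I. -/

import Mathlib

noncomputable section
open scoped RealInnerProductSpace

/-- Euclidean 3-space `ℝ³`. -/
abbrev E3 : Type := EuclideanSpace ℝ (Fin 3)

/-- The cross product on `E3`. -/
def cross (u v : E3) : E3 :=
  (WithLp.equiv 2 (Fin 3 → ℝ)).symm
    ![u 1 * v 2 - u 2 * v 1, u 2 * v 0 - u 0 * v 2, u 0 * v 1 - u 1 * v 0]

/-- Determinant of the 3×3 matrix with columns `u`, `v`, `w`. -/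
def det3 (u v w : E3) : ℝ :=
  Matrix.det !![u 0, v 0, w 0; u 1, v 1, w 1; u 2, v 2, w 2]

namespace Ruled

/-- The director curve `e = v₀`. -/
def e (v₀ : ℝ → E3) : ℝ → E3 := v₀

/-- The base curve `r = v₀ × v₁`. -/
def r (v₀ v₁ : ℝ → E3) : ℝ → E3 := fun s => cross (v₀ s) (v₁ s)

/-- The parametrization `F(s,t) = r(s) + t • e(s)` of the ruled surface. -/
def F (v₀ v₁ : ℝ → E3) (s t : ℝ) : E3 := r v₀ v₁ s + t • v₀ s

/-- `n₀ = v₀'`. -/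
def n₀ (v₀ : ℝ → E3) : ℝ → E3 := fun s => deriv v₀ s

/-- `κ₁ = ⟪v₀', v₁'⟫`, the ε-part of the dual curvature. -/
def κ₁ (v₀ v₁ : ℝ → E3) : ℝ → ℝ := fun s => ⟪deriv v₀ s, deriv v₁ s⟫

/-- `n₁ = v₁' - κ₁ • v₀'`. -/
def n₁ (v₀ v₁ : ℝ → E3) : ℝ → E3 := fun s => deriv v₁ s - κ₁ v₀ v₁ s • deriv v₀ s

/-- `t₀ = v₀ × n₀`. -/
def t₀ (v₀ : ℝ → E3) : ℝ → E3 := fun s => cross (v₀ s) (n₀ v₀ s)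

/-- `t₁ = v₀ × n₁ + v₁ × n₀`. -/
def t₁ (v₀ v₁ : ℝ → E3) : ℝ → E3 :=
  fun s => cross (v₀ s) (n₁ v₀ v₁ s) + cross (v₁ s) (n₀ v₀ s)

/-- `τ₀ = ⟪n₀', t₀⟫`, the real part of the dual torsion. -/
def τ₀ (v₀ : ℝ → E3) : ℝ → ℝ := fun s => ⟪deriv (n₀ v₀) s, t₀ v₀ s⟫

/-- `τ₁ = ⟪n₀', t₁⟫ + ⟪n₁', t₀⟫`, the ε-part of the dual torsion. -/
def τ₁ (v₀ v₁ : ℝ → E3) : ℝ → ℝ :=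
  fun s => ⟪deriv (n₀ v₀) s, t₁ v₀ v₁ s⟫ + ⟪deriv (n₁ v₀ v₁) s, t₀ v₀ s⟫

/-- The striction curve `σ(s) = r(s) - ⟪r'(s), e'(s)⟫ • e(s)`. -/
def strict (v₀ v₁ : ℝ → E3) : ℝ → E3 :=
  fun s => r v₀ v₁ s - ⟪deriv (r v₀ v₁) s, deriv (e v₀) s⟫ • e v₀ s

end Ruled

open Ruled

/-!
The pair `v₀ + ε v₁` has a dual Frenet frame whose real part `(v₀, n₀, t₀)` is orthonormal.
Because `⟪r', e'⟫ = -⟪n₁, t₀⟫`, the striction curve is `σ = r + ⟪n₁, t₀⟫ • v₀`. By the Frenet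
equation, `t₀' = -τ₀ • n₀`, which is orthogonal to `n₁`, so `⟪n₁, t₀⟫' = ⟪n₁', t₀⟫`; this is half of
`τ₁`. Expanding `r'` in the frame gives the term `κ₁ • t₀`, a term cancelling `⟪n₁, t₀⟫ • v₀'`,
and the coefficient `⟪v₁, t₀⟫ = ⟪n₀', t₁⟫` of `v₀`, the other half of `τ₁`.
-/

open scoped Matrix Topology

section InnerProductSpace

variable {E : Type*} [NormedAddCommGroup E] [InnerProductSpace ℝ E]

lemma sum_inner_smul_of_orthonormal_of_card_eq_finrank {ι : Type*} [Fintype ι]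
    [FiniteDimensional ℝ E] {b : ι → E} (hb : Orthonormal ℝ b)
    (hcard : Fintype.card ι = Module.finrank ℝ E) (x : E) : ∑ i, ⟪b i, x⟫ • b i = x := by
  have hspan := hb.linearIndependent.span_eq_top_of_card_eq_finrank' hcard
  simpa using (OrthonormalBasis.mk hb hspan.ge).sum_repr' x

variable {f g : ℝ → E} {f' g' : E} {s : ℝ}

lemma inner_add_inner_eq_zero_of_inner_eventually_const {c : ℝ} (hf : HasDerivAt f f' s)
    (hg : HasDerivAt g g' s) (hc : ∀ᶠ x in 𝓝 s, ⟪f x, g x⟫ = c) : ⟪f s, g'⟫ + ⟪f', g s⟫ = 0 :=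
  (hf.inner ℝ hg).unique ((hasDerivAt_const s c).congr_of_eventuallyEq hc)

lemma inner_eq_zero_of_norm_eventually_const {c : ℝ} (hf : HasDerivAt f f' s)
    (hc : ∀ᶠ x in 𝓝 s, ‖f x‖ = c) : ⟪f s, f'⟫ = 0 := by
  have hsq : ∀ᶠ x in 𝓝 s, ⟪f x, f x⟫ = c ^ 2 :=
    hc.mono fun x hx => by rw [real_inner_self_eq_norm_sq, hx]
  have hsum := inner_add_inner_eq_zero_of_inner_eventually_const hf hf hsq
  rw [real_inner_comm (f s) f'] at hsum
  linarith

end InnerProductSpace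

section Cross

lemma real_inner_eq_dotProduct {ι : Type*} [Fintype ι] (u v : EuclideanSpace ℝ ι) :
    ⟪u, v⟫ = u.ofLp ⬝ᵥ v.ofLp := by
  rw [EuclideanSpace.inner_eq_star_dotProduct, star_trivial, dotProduct_comm]

variable (u v w x : E3)

lemma ofLp_cross : (cross u v).ofLp = u.ofLp ⨯₃ v.ofLp :=
  (cross_apply _ _).symm

lemma inner_self_cross : ⟪u, cross u v⟫ = 0 := by
  rw [real_inner_eq_dotProduct, ofLp_cross, dot_self_cross]

lemma inner_cross_self : ⟪v, cross u v⟫ = 0 := by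
  rw [real_inner_eq_dotProduct, ofLp_cross, dot_cross_self]

lemma inner_cross_permutation : ⟪u, cross v w⟫ = ⟪v, cross w u⟫ := by
  simp only [real_inner_eq_dotProduct, ofLp_cross, triple_product_permutation u.ofLp]

lemma inner_cross_cross :
    ⟪cross u v, cross w x⟫ = ⟪u, w⟫ * ⟪v, x⟫ - ⟪u, x⟫ * ⟪v, w⟫ := by
  simp only [real_inner_eq_dotProduct, ofLp_cross, cross_dot_cross]

lemma cross_self_eq_zero : cross u u = 0 := by
  apply WithLp.ofLp_injective 2
  rw [ofLp_cross, cross_self, WithLp.ofLp_zero]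

lemma neg_cross_eq_cross_swap : -cross u v = cross v u := by
  apply WithLp.ofLp_injective 2
  rw [WithLp.ofLp_neg, ofLp_cross, ofLp_cross, cross_anticomm]

lemma cross_cross_eq : cross u (cross v w) = ⟪u, w⟫ • v - ⟪v, u⟫ • w := by
  apply WithLp.ofLp_injective 2
  simp only [real_inner_eq_dotProduct, ofLp_cross, cross_cross_eq_smul_sub_smul',
    WithLp.ofLp_sub, WithLp.ofLp_smul]

lemma isBilinearMap_cross : IsBilinearMap ℝ cross := by
  constructor <;> intros <;> apply WithLp.ofLp_injective 2 <;> simp [ofLp_cross]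

lemma cross_sub_right : cross u (v - w) = cross u v - cross u w :=
  (isBilinearMap_cross.toLinearMap u).map_sub v w

variable {u v}

lemma hasDerivAt_cross {f g : ℝ → E3} {f' g' : E3} {s : ℝ} (hf : HasDerivAt f f' s)
    (hg : HasDerivAt g g' s) :
    HasDerivAt (fun x => cross (f x) (g x)) (cross (f s) g' + cross f' (g s)) s :=
  isBilinearMap_cross.toContinuousBilinearMap.hasDerivAt_of_bilinear (fun _ => hf) fun _ => hg

lemma orthonormal_cross_frame (hu : ‖u‖ = 1) (hv : ‖v‖ = 1) (huv : ⟪u, v⟫ = 0) :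
    Orthonormal ℝ ![u, v, cross u v] := by
  have hnorm : ‖cross u v‖ = 1 := by
    rw [norm_eq_sqrt_real_inner, inner_cross_cross]
    simp [hu, hv, huv]
  simp [orthonormal_vecCons_iff, hu, hv, huv, hnorm, inner_self_cross, inner_cross_self]

lemma eq_cross_frame_expansion (hu : ‖u‖ = 1) (hv : ‖v‖ = 1) (huv : ⟪u, v⟫ = 0) :
    x = ⟪u, x⟫ • u + ⟪v, x⟫ • v + ⟪cross u v, x⟫ • cross u v := by
  have hsum := sum_inner_smul_of_orthonormal_of_card_eq_finrank
    (orthonormal_cross_frame hu hv huv) (by simp) x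
  simpa [Fin.sum_univ_three] using hsum.symm

end Cross

namespace Ruled

variable {v₀ v₁ : ℝ → E3} {s : ℝ}

lemma inner_n₀_t₀ : ⟪n₀ v₀ s, t₀ v₀ s⟫ = 0 :=
  inner_cross_self _ _

lemma inner_n₁_t₀ : ⟪n₁ v₀ v₁ s, t₀ v₀ s⟫ = ⟪deriv v₁ s, t₀ v₀ s⟫ := by
  change ⟪deriv v₁ s - κ₁ v₀ v₁ s • n₀ v₀ s, t₀ v₀ s⟫ = _
  rw [inner_sub_left, real_inner_smul_left, inner_n₀_t₀, mul_zero, sub_zero]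

lemma inner_n₀_n₁ (harc : ‖n₀ v₀ s‖ = 1) : ⟪n₀ v₀ s, n₁ v₀ v₁ s⟫ = 0 := by
  change ⟪n₀ v₀ s, deriv v₁ s - ⟪n₀ v₀ s, deriv v₁ s⟫ • n₀ v₀ s⟫ = 0
  rw [inner_sub_right, real_inner_smul_right, real_inner_self_eq_norm_sq, harc]
  ring

lemma hasDerivAt_r (hv₀ : DifferentiableAt ℝ v₀ s) (hv₁ : DifferentiableAt ℝ v₁ s) :
    HasDerivAt (r v₀ v₁) (cross (v₀ s) (deriv v₁ s) + cross (n₀ v₀ s) (v₁ s)) s :=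
  hasDerivAt_cross hv₀.hasDerivAt hv₁.hasDerivAt

lemma inner_deriv_r_n₀ (hv₀ : DifferentiableAt ℝ v₀ s) (hv₁ : DifferentiableAt ℝ v₁ s) :
    ⟪deriv (r v₀ v₁) s, n₀ v₀ s⟫ = -⟪n₁ v₀ v₁ s, t₀ v₀ s⟫ := by
  rw [(hasDerivAt_r hv₀ hv₁).deriv, real_inner_comm, inner_add_right, inner_self_cross, add_zero,
    inner_n₁_t₀, t₀, ← inner_neg_right, neg_cross_eq_cross_swap,
    inner_cross_permutation (deriv v₁ s), inner_cross_permutation]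

lemma strict_eventuallyEq (hv₀ : ContDiffAt ℝ 1 v₀ s) (hv₁ : ContDiffAt ℝ 1 v₁ s) :
    strict v₀ v₁ =ᶠ[𝓝 s] fun x => r v₀ v₁ x + ⟪n₁ v₀ v₁ x, t₀ v₀ x⟫ • v₀ x := by
  filter_upwards [hv₀.eventually (by simp), hv₁.eventually (by simp)] with x hx₀ hx₁
  change r v₀ v₁ x - ⟪deriv (r v₀ v₁) x, n₀ v₀ x⟫ • v₀ x = _
  rw [inner_deriv_r_n₀ (hx₀.differentiableAt one_ne_zero) (hx₁.differentiableAt one_ne_zero),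
    neg_smul, sub_neg_eq_add]

lemma inner_v₀_n₀ (hv₀ : DifferentiableAt ℝ v₀ s) (hunit : ∀ᶠ x in 𝓝 s, ‖v₀ x‖ = 1) :
    ⟪v₀ s, n₀ v₀ s⟫ = 0 :=
  inner_eq_zero_of_norm_eventually_const hv₀.hasDerivAt hunit

lemma hasDerivAt_n₀ (hv₀ : ContDiffAt ℝ 2 v₀ s) (hunit : ∀ᶠ x in 𝓝 s, ‖v₀ x‖ = 1)
    (harc : ∀ᶠ x in 𝓝 s, ‖n₀ v₀ x‖ = 1) :
    HasDerivAt (n₀ v₀) (τ₀ v₀ s • t₀ v₀ s - v₀ s) s := by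
  have hd₀ : DifferentiableAt ℝ v₀ s := hv₀.differentiableAt two_ne_zero
  have hdn : HasDerivAt (n₀ v₀) (deriv (n₀ v₀) s) s :=
    ((hv₀.derivWithin (m := 1) (by norm_num)).differentiableAt one_ne_zero).hasDerivAt
  have horth : ∀ᶠ x in 𝓝 s, ⟪v₀ x, n₀ v₀ x⟫ = 0 := by
    filter_upwards [hv₀.eventually (by simp), hunit.eventually_nhds] with x hx hux
    exact inner_v₀_n₀ (hx.differentiableAt two_ne_zero) hux
  have hv₀_coord : ⟪v₀ s, deriv (n₀ v₀) s⟫ = -1 := by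
    have hsum : ⟪v₀ s, deriv (n₀ v₀) s⟫ + ⟪n₀ v₀ s, n₀ v₀ s⟫ = 0 :=
      inner_add_inner_eq_zero_of_inner_eventually_const hd₀.hasDerivAt hdn horth
    rw [real_inner_self_eq_norm_sq, harc.self_of_nhds] at hsum
    linarith
  have hn₀_coord : ⟪n₀ v₀ s, deriv (n₀ v₀) s⟫ = 0 :=
    inner_eq_zero_of_norm_eventually_const hdn harc
  convert! hdn using 1
  rw [eq_cross_frame_expansion (deriv (n₀ v₀) s) hunit.self_of_nhds harc.self_of_nhds
    horth.self_of_nhds, hv₀_coord, hn₀_coord, real_inner_comm]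
  simp only [neg_smul, one_smul, zero_smul, add_zero, neg_add_eq_sub, τ₀, t₀]

lemma hasDerivAt_t₀ (hv₀ : ContDiffAt ℝ 2 v₀ s) (hunit : ∀ᶠ x in 𝓝 s, ‖v₀ x‖ = 1)
    (harc : ∀ᶠ x in 𝓝 s, ‖n₀ v₀ x‖ = 1) : HasDerivAt (t₀ v₀) (-τ₀ v₀ s • n₀ v₀ s) s := by
  have hd₀ : DifferentiableAt ℝ v₀ s := hv₀.differentiableAt two_ne_zero
  have hcross : cross (v₀ s) (t₀ v₀ s) = -n₀ v₀ s := by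
    rw [t₀, cross_cross_eq, inner_v₀_n₀ hd₀ hunit, real_inner_self_eq_norm_sq, hunit.self_of_nhds]
    simp
  refine (hasDerivAt_cross hd₀.hasDerivAt (hasDerivAt_n₀ hv₀ hunit harc)).congr_deriv ?_
  change cross (v₀ s) (τ₀ v₀ s • t₀ v₀ s - v₀ s) + cross (n₀ v₀ s) (n₀ v₀ s) = _
  rw [cross_sub_right, isBilinearMap_cross.smul_right, hcross, cross_self_eq_zero,
    cross_self_eq_zero, sub_zero, add_zero, smul_neg, neg_smul]

lemma differentiableAt_n₁ (hv₀ : ContDiffAt ℝ 2 v₀ s) (hv₁ : ContDiffAt ℝ 2 v₁ s) :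
    DifferentiableAt ℝ (n₁ v₀ v₁) s := by
  have hd₀ := (hv₀.derivWithin (m := 1) (by norm_num)).differentiableAt one_ne_zero
  have hd₁ := (hv₁.derivWithin (m := 1) (by norm_num)).differentiableAt one_ne_zero
  exact hd₁.sub ((hd₀.inner ℝ hd₁).smul hd₀)

lemma hasDerivAt_inner_n₁_t₀ (hv₀ : ContDiffAt ℝ 2 v₀ s) (hv₁ : ContDiffAt ℝ 2 v₁ s)
    (hunit : ∀ᶠ x in 𝓝 s, ‖v₀ x‖ = 1) (harc : ∀ᶠ x in 𝓝 s, ‖n₀ v₀ x‖ = 1) :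
    HasDerivAt (fun x => ⟪n₁ v₀ v₁ x, t₀ v₀ x⟫) ⟪deriv (n₁ v₀ v₁) s, t₀ v₀ s⟫ s := by
  refine ((differentiableAt_n₁ hv₀ hv₁).hasDerivAt.inner ℝ
    (hasDerivAt_t₀ hv₀ hunit harc)).congr_deriv ?_
  rw [real_inner_smul_right, real_inner_comm, inner_n₀_n₁ harc.self_of_nhds, mul_zero, zero_add]

lemma inner_v₀_t₁ : ⟪v₀ s, t₁ v₀ v₁ s⟫ = -⟪v₁ s, t₀ v₀ s⟫ := by
  rw [t₁, t₀, inner_add_right, inner_self_cross, zero_add, inner_cross_permutation,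
    ← inner_neg_right, neg_cross_eq_cross_swap]

lemma inner_t₀_t₁ (harc : ‖n₀ v₀ s‖ = 1) (hvn : ⟪v₀ s, n₀ v₀ s⟫ = 0) :
    ⟪t₀ v₀ s, t₁ v₀ v₁ s⟫ = ⟪v₀ s, v₁ s⟫ := by
  simp only [t₁, t₀, inner_add_right, inner_cross_cross, inner_n₀_n₁ harc, hvn,
    real_inner_comm (v₀ s) (n₀ v₀ s), real_inner_self_eq_norm_sq, harc]
  ring

lemma inner_deriv_n₀_t₁ (hv₀ : ContDiffAt ℝ 2 v₀ s) (hunit : ∀ᶠ x in 𝓝 s, ‖v₀ x‖ = 1)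
    (harc : ∀ᶠ x in 𝓝 s, ‖n₀ v₀ x‖ = 1) (horth : ⟪v₀ s, v₁ s⟫ = 0) :
    ⟪deriv (n₀ v₀) s, t₁ v₀ v₁ s⟫ = ⟪v₁ s, t₀ v₀ s⟫ := by
  have hvn := inner_v₀_n₀ (hv₀.differentiableAt two_ne_zero) hunit
  rw [(hasDerivAt_n₀ hv₀ hunit harc).deriv, inner_sub_left, real_inner_smul_left, inner_v₀_t₁,
    inner_t₀_t₁ harc.self_of_nhds hvn, horth, mul_zero, sub_neg_eq_add, zero_add]

lemma deriv_r_eq_frame_expansion (hv₀ : DifferentiableAt ℝ v₀ s) (hv₁ : DifferentiableAt ℝ v₁ s)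
    (hunit : ‖v₀ s‖ = 1) (harc : ‖n₀ v₀ s‖ = 1) (hvn : ⟪v₀ s, n₀ v₀ s⟫ = 0)
    (horth : ⟪v₀ s, v₁ s⟫ = 0) :
    deriv (r v₀ v₁) s =
      ⟪v₁ s, t₀ v₀ s⟫ • v₀ s - ⟪n₁ v₀ v₁ s, t₀ v₀ s⟫ • n₀ v₀ s + κ₁ v₀ v₁ s • t₀ v₀ s := by
  have hderiv := (hasDerivAt_r hv₀ hv₁).deriv
  have hv₀_coord : ⟪v₀ s, deriv (r v₀ v₁) s⟫ = ⟪v₁ s, t₀ v₀ s⟫ := by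
    rw [hderiv, inner_add_right, inner_self_cross, zero_add, t₀, inner_cross_permutation (v₁ s)]
  have hn₀_coord : ⟪n₀ v₀ s, deriv (r v₀ v₁) s⟫ = -⟪n₁ v₀ v₁ s, t₀ v₀ s⟫ := by
    rw [real_inner_comm, inner_deriv_r_n₀ hv₀ hv₁]
  have ht₀_coord : ⟪t₀ v₀ s, deriv (r v₀ v₁) s⟫ = κ₁ v₀ v₁ s := by
    rw [hderiv, t₀, inner_add_right, inner_cross_cross, inner_cross_cross, hvn, horth,
      real_inner_self_eq_norm_sq, hunit, real_inner_comm (v₀ s) (n₀ v₀ s), hvn]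
    change _ = ⟪n₀ v₀ s, deriv v₁ s⟫
    ring
  calc deriv (r v₀ v₁) s
      = ⟪v₀ s, deriv (r v₀ v₁) s⟫ • v₀ s + ⟪n₀ v₀ s, deriv (r v₀ v₁) s⟫ • n₀ v₀ s
          + ⟪t₀ v₀ s, deriv (r v₀ v₁) s⟫ • t₀ v₀ s :=
        eq_cross_frame_expansion _ hunit harc hvn
    _ = _ := by rw [hv₀_coord, hn₀_coord, ht₀_coord, neg_smul, ← sub_eq_add_neg]

end Ruled

theorem striction_curve_deriv_general {v₀ v₁ : ℝ → E3} {s : ℝ}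
    (hv₀ : ContDiffAt ℝ 2 v₀ s) (hv₁ : ContDiffAt ℝ 2 v₁ s)
    (hunit : ∀ᶠ x in 𝓝 s, ‖v₀ x‖ = 1) (horth : ⟪v₀ s, v₁ s⟫ = 0)
    (harc : ∀ᶠ x in 𝓝 s, ‖deriv v₀ x‖ = 1) :
    HasDerivAt (strict v₀ v₁) (τ₁ v₀ v₁ s • v₀ s + κ₁ v₀ v₁ s • t₀ v₀ s) s := by
  have hd₀ : DifferentiableAt ℝ v₀ s := hv₀.differentiableAt two_ne_zero
  have hd₁ : DifferentiableAt ℝ v₁ s := hv₁.differentiableAt two_ne_zero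
  have hstrict : strict v₀ v₁ =ᶠ[𝓝 s] fun x => r v₀ v₁ x + ⟪n₁ v₀ v₁ x, t₀ v₀ x⟫ • v₀ x :=
    strict_eventuallyEq (hv₀.of_le one_le_two) (hv₁.of_le one_le_two)
  have hsum := (hasDerivAt_r hd₀ hd₁).differentiableAt.hasDerivAt.add
    ((hasDerivAt_inner_n₁_t₀ hv₀ hv₁ hunit harc).smul hd₀.hasDerivAt)
  refine (hsum.congr_of_eventuallyEq hstrict).congr_deriv ?_
  rw [deriv_r_eq_frame_expansion hd₀ hd₁ hunit.self_of_nhds harc.self_of_nhds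
    (inner_v₀_n₀ hd₀ hunit) horth, τ₁, inner_deriv_n₀_t₁ hv₀ hunit harc horth, add_smul, n₀]
  abel

/-- The derivative of the striction curve is `σ' = τ₁ • v₀ + κ₁ • t₀`. -/
theorem striction_curve_deriv
    (I : Set ℝ) (v₀ v₁ : ℝ → E3)
    (hI : IsOpen I) (hI' : I.OrdConnected)
    (hv₀ : ContDiffOn ℝ (⊤ : ℕ∞) v₀ I) (hv₁ : ContDiffOn ℝ (⊤ : ℕ∞) v₁ I)
    (hunit : ∀ s ∈ I, ‖v₀ s‖ = 1) (horth : ∀ s ∈ I, ⟪v₀ s, v₁ s⟫ = 0)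
    (harc : ∀ s ∈ I, ‖deriv v₀ s‖ = 1) :
    ∀ s ∈ I, deriv (strict v₀ v₁) s = τ₁ v₀ v₁ s • v₀ s + κ₁ v₀ v₁ s • t₀ v₀ s := by
  intro s hs
  have hnhds : I ∈ 𝓝 s := hI.mem_nhds hs
  have hC2 : (2 : WithTop ℕ∞) ≤ (⊤ : ℕ∞) := WithTop.coe_le_coe.2 le_top
  exact (striction_curve_deriv_general ((hv₀.contDiffAt hnhds).of_le hC2)
    ((hv₁.contDiffAt hnhds).of_le hC2) (Filter.eventually_of_mem hnhds hunit) (horth s hs)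
    (Filter.eventually_of_mem hnhds harc)).deriv
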